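/- arXiv:1901.01719 — 2 statements merged into one kernel-verified Lean document; each statement's English description precedes it below -/
import Mathlib

section
/- Let D_n be the number of descents of a uniformly random permutation of S_n. There exists a constant C > 0 such that for all n ≥ 1, sup over x ∈ ℝ of | P( (D_n − (n−1)/2) / sqrt((n+1)/12) ≤ x ) − Φ(x) | ≤ C / sqrt(n), where Φ is the cumulative distribution function of the standard normal distribution. -/
open Finset

/-- The value of `π` at (0-indexed) position `j`, or `0` if `j` is out of range. -/
def permVal {n : ℕ} (π : Equiv.Perm (Fin n)) (j : ℕ) : ℕ :=
  if h : j < n then (π ⟨j, h⟩ : ℕ) else 0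

/-- The number of descents of a permutation of `n` elements: the number of positions
`i` (0-indexed, `i < n - 1`) with `π i > π (i+1)`. -/
def des {n : ℕ} (π : Equiv.Perm (Fin n)) : ℕ :=
  ((Finset.range (n - 1)).filter (fun i => permVal π (i + 1) < permVal π i)).card

/-- The standard normal cumulative distribution function
`Φ(x) = ∫_{-∞}^x (1/√(2π)) e^{-t²/2} dt`. -/
noncomputable def stdNormalCDF (x : ℝ) : ℝ :=
  ∫ t in Set.Iic x, (1 / Real.sqrt (2 * Real.pi)) * Real.exp (-t ^ 2 / 2)

/-!
Inserting the largest letter into a permutation of `m + 1` letters with `d` descents gives `d`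
descents for `d + 1` of the positions and `d + 1` descents for the remaining `m + 1 - d`. The
resulting recursion for `ℙ (des < c)` is the one satisfied at `c` by the distribution function of
the sum `S` of `m + 1` independent uniform variables on `[0, 1]`; hence (Tanny) the number of
descents is distributed as `⌊S⌋`.

The normal approximation of `S` is Stein's method with zero biasing. Integration by parts turns
`𝔼 [(U - 1 / 2) f U]` for uniform `U` into `(1 / 12) 𝔼 [f' V]`, where `V` has the Beta(2, 2)
distribution, so replacing one summand of `S` by `V` leaves an error controlled by the oscillation
of `w ↦ w * F w` for the Stein solution `F`. The replacement also costs a shift of at most `1`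
between the distribution functions, which is of the same order `1 / σ`.
-/

section InsertMax

variable {n : ℕ}

/-- The permutation of `n + 1` letters whose one-line notation is obtained from that of `π` by
inserting the largest letter at position `p`. -/
def insertMax (p : Fin (n + 1)) (π : Equiv.Perm (Fin n)) : Equiv.Perm (Fin (n + 1)) :=
  (finSuccEquiv' p).trans ((Equiv.optionCongr π).trans (finSuccEquiv' (Fin.last n)).symm)

lemma insertMax_self (p : Fin (n + 1)) (π : Equiv.Perm (Fin n)) :
    insertMax p π p = Fin.last n := by
  simp [insertMax]

lemma insertMax_succAbove (p : Fin (n + 1)) (π : Equiv.Perm (Fin n)) (i : Fin n) :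
    insertMax p π (p.succAbove i) = (π i).castSucc := by
  simp [insertMax]

lemma insertMax_bijective :
    Function.Bijective fun x : Fin (n + 1) × Equiv.Perm (Fin n) ↦ insertMax x.1 x.2 := by
  rw [Fintype.bijective_iff_injective_and_card]
  refine ⟨?_, by simp [Fintype.card_perm, Nat.factorial_succ]⟩
  rintro ⟨p, π⟩ ⟨p', π'⟩ (h : insertMax p π = insertMax p' π')
  obtain rfl : p = p' := (insertMax p π).injective <| by rw [insertMax_self, h, insertMax_self]
  congr 1
  ext i : 1
  apply Fin.castSucc_injective
  rw [← insertMax_succAbove p π, h, insertMax_succAbove]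

lemma permVal_insertMax_of_lt {p : Fin (n + 1)} {j : ℕ} (hj : j < p) (π : Equiv.Perm (Fin n)) :
    permVal (insertMax p π) j = permVal π j := by
  have hjn : j < n := by omega
  have h_pos : p.succAbove ⟨j, hjn⟩ = ⟨j, by omega⟩ := Fin.succAbove_of_castSucc_lt _ _ hj
  rw [permVal, dif_pos (by omega), ← h_pos, insertMax_succAbove, permVal, dif_pos hjn,
    Fin.val_castSucc]

lemma permVal_insertMax_self (p : Fin (n + 1)) (π : Equiv.Perm (Fin n)) :
    permVal (insertMax p π) p = n := by
  rw [permVal, dif_pos p.is_lt, Fin.eta, insertMax_self, Fin.val_last]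

lemma permVal_insertMax_succ {p : Fin (n + 1)} {j : ℕ} (hj : p ≤ j) (π : Equiv.Perm (Fin n)) :
    permVal (insertMax p π) (j + 1) = permVal π j := by
  by_cases hjn : j < n
  · have h_pos : p.succAbove ⟨j, hjn⟩ = ⟨j + 1, by omega⟩ := Fin.succAbove_of_le_castSucc _ _ hj
    rw [permVal, dif_pos (by omega), ← h_pos, insertMax_succAbove, permVal, dif_pos hjn,
      Fin.val_castSucc]
  · simp [permVal, hjn]

lemma permVal_lt (π : Equiv.Perm (Fin (n + 1))) (j : ℕ) : permVal π j < n + 1 := by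
  unfold permVal
  split_ifs <;> omega

lemma des_eq_count (π : Equiv.Perm (Fin (n + 1))) :
    des π = Nat.count (fun i ↦ permVal π (i + 1) < permVal π i) n :=
  (Nat.count_eq_card_filter_range _ n).symm

lemma count_descents_insertMax_of_lt {p : Fin (n + 1)} {k : ℕ} (hk : k < p)
    (π : Equiv.Perm (Fin n)) :
    Nat.count (fun i ↦ permVal (insertMax p π) (i + 1) < permVal (insertMax p π) i) k =
      Nat.count (fun i ↦ permVal π (i + 1) < permVal π i) k := by
  rw [Nat.count_eq_card_filter_range, Nat.count_eq_card_filter_range]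
  congr 1
  refine filter_congr fun i hi ↦ ?_
  rw [mem_range] at hi
  rw [permVal_insertMax_of_lt (by omega), permVal_insertMax_of_lt (by omega)]

lemma des_insertMax_zero (π : Equiv.Perm (Fin (n + 1))) : des (insertMax 0 π) = des π + 1 := by
  have h_zero : permVal (insertMax 0 π) 0 = n + 1 := permVal_insertMax_self 0 π
  have h_succ (j : ℕ) : permVal (insertMax 0 π) (j + 1) = permVal π j :=
    permVal_insertMax_succ (Nat.zero_le j) π
  rw [des_eq_count, des_eq_count, Nat.count_succ']
  simp only [h_zero, h_succ, if_pos (permVal_lt π 0)]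

lemma des_insertMax_last (π : Equiv.Perm (Fin (n + 1))) :
    des (insertMax (Fin.last (n + 1)) π) = des π := by
  have h_last : permVal (insertMax (Fin.last (n + 1)) π) (n + 1) = n + 1 :=
    permVal_insertMax_self (Fin.last (n + 1)) π
  have h_pred : permVal (insertMax (Fin.last (n + 1)) π) n = permVal π n :=
    permVal_insertMax_of_lt n.lt_succ_self π
  rw [des_eq_count, des_eq_count, Nat.count_succ, h_last, h_pred,
    if_neg (permVal_lt π n).not_gt, add_zero, count_descents_insertMax_of_lt n.lt_succ_self]

lemma des_insertMax_castSucc_succ (π : Equiv.Perm (Fin (n + 1))) (i : Fin n) :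
    des (insertMax i.succ.castSucc π) =
      if permVal π (i + 1) < permVal π i then des π else des π + 1 := by
  set p : Fin (n + 2) := i.succ.castSucc
  obtain ⟨r, hr⟩ : ∃ r, n = i + 1 + r := ⟨n - (i + 1), by omega⟩
  have h_pred : permVal (insertMax p π) i = permVal π i :=
    permVal_insertMax_of_lt (Nat.lt_succ_self i) π
  have h_self : permVal (insertMax p π) (i + 1) = n + 1 := permVal_insertMax_self p π
  have h_succ {j : ℕ} (hj : i + 1 ≤ j) : permVal (insertMax p π) (j + 1) = permVal π j :=
    permVal_insertMax_succ hj π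
  have h_tail (j : ℕ) : permVal (insertMax p π) (i + 1 + 1 + j) = permVal π (i + 1 + j) := by
    rw [show (i : ℕ) + 1 + 1 + j = i + 1 + j + 1 by omega, h_succ (Nat.le_add_right _ _)]
  have h_tail_succ (j : ℕ) : permVal (insertMax p π) (i + 1 + 1 + j + 1) =
      permVal π (i + 1 + j + 1) := h_tail (j + 1)
  have h_init := count_descents_insertMax_of_lt (p := p) (Nat.lt_succ_self i) π
  have h_insert : des (insertMax p π) = Nat.count
      (fun j ↦ permVal (insertMax p π) (j + 1) < permVal (insertMax p π) j) (i + 1 + 1 + r) := by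
    rw [des_eq_count, show i + 1 + 1 + r = n + 1 by omega]
  have h_des : des π = Nat.count (fun j ↦ permVal π (j + 1) < permVal π j) (i + 1 + r) := by
    rw [des_eq_count, ← hr]
  rw [h_insert, h_des, Nat.count_add _ (i + 1 + 1), Nat.count_succ _ (i + 1), Nat.count_succ _ i,
    Nat.count_add _ (i + 1) r, Nat.count_succ _ i, h_init, h_pred, h_self, h_succ le_rfl,
    if_neg (permVal_lt π i).not_gt, if_pos (permVal_lt π (i + 1))]
  simp only [h_tail, h_tail_succ]
  split_ifs <;> ring

end InsertMax

lemma sum_des_insertMax {R : Type*} [Ring R] {n : ℕ} (π : Equiv.Perm (Fin (n + 1)))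
    (g : ℕ → R) :
    ∑ p, g (des (insertMax p π)) = (des π + 1) * g (des π) + (n + 1 - des π) * g (des π + 1) := by
  have h_des : #{i : Fin n | permVal π (i + 1) < permVal π i} = des π := by
    rw [des_eq_count, Nat.count_eq_card_filter_range, card_filter, card_filter,
      Fin.sum_univ_eq_sum_range fun i ↦ if permVal π (i + 1) < permVal π i then 1 else 0]
  have h_asc : (#{i : Fin n | ¬ permVal π (i + 1) < permVal π i} : R) = n - des π := by
    rw [eq_sub_iff_add_eq', ← h_des, ← Nat.cast_add, card_filter_add_card_filter_not, card_fin]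
  rw [Fin.sum_univ_castSucc, Fin.sum_univ_succ]
  simp only [Fin.castSucc_zero, des_insertMax_zero, des_insertMax_last,
    des_insertMax_castSucc_succ, apply_ite g, sum_ite, sum_const, nsmul_eq_mul, h_des, h_asc]
  noncomm_ring

lemma sum_des_perm_succ {R : Type*} [Ring R] (n : ℕ) (g : ℕ → R) :
    ∑ σ : Equiv.Perm (Fin (n + 2)), g (des σ) =
      ∑ π : Equiv.Perm (Fin (n + 1)),
        ((des π + 1) * g (des π) + (n + 1 - des π) * g (des π + 1)) := by
  rw [← insertMax_bijective.sum_comp fun σ ↦ g (des σ), Fintype.sum_prod_type_right]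
  exact sum_congr rfl fun π _ ↦ sum_des_insertMax π g

lemma abs_map_le_of_monotone {E F 𝓕 : Type*} [Lattice E] [AddGroup E] [Lattice F] [AddGroup F]
    [FunLike 𝓕 E F] [AddMonoidHomClass 𝓕 E F] {T : 𝓕} (hT : Monotone T) {f g : E}
    (h : |f| ≤ g) : |T f| ≤ T g := by
  rw [abs_le'] at h ⊢
  exact ⟨hT h.1, map_neg T f ▸ hT h.2⟩

section UnitConv

open MeasureTheory intervalIntegral

/-- Convolution with the density `w` restricted to `[0, 1]`: if `U` has this density, then
`unitConv w f x = 𝔼[f (x - U)]`. -/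
noncomputable def unitConv (w : C(ℝ, ℝ)) : Module.End ℝ C(ℝ, ℝ) where
  toFun f :=
    { toFun := fun x ↦ ∫ u in (0 : ℝ)..1, w u * f (x - u)
      continuous_toFun := continuous_parametric_intervalIntegral_of_continuous'
        (by unfold Function.uncurry; fun_prop) 0 1 }
  map_add' f g := by
    ext x
    simp only [ContinuousMap.coe_mk, ContinuousMap.add_apply, mul_add]
    exact integral_add (Continuous.intervalIntegrable (by fun_prop) _ _)
      (Continuous.intervalIntegrable (by fun_prop) _ _)
  map_smul' c f := by
    ext x
    simp only [ContinuousMap.coe_mk, ContinuousMap.smul_apply, smul_eq_mul, mul_left_comm (w _),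
      intervalIntegral.integral_const_mul, RingHom.id_apply]

lemma unitConv_apply (w f : C(ℝ, ℝ)) (x : ℝ) :
    unitConv w f x = ∫ u in (0 : ℝ)..1, w u * f (x - u) := rfl

lemma unitConv_one (w : C(ℝ, ℝ)) : unitConv w 1 = (∫ u in (0 : ℝ)..1, w u) • 1 := by
  ext x
  simp [unitConv_apply]

lemma unitConv_commute (v w : C(ℝ, ℝ)) : Commute (unitConv v) (unitConv w) := by
  ext f x
  simp only [Module.End.mul_apply, unitConv_apply, integral_of_le zero_le_one]
  simp only [← MeasureTheory.integral_const_mul]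
  rw [integral_integral_swap]
  · simp only [sub_right_comm x, mul_left_comm (v _)]
  · rw [Measure.prod_restrict]
    have h_cont : Continuous (Function.uncurry fun s t : ℝ ↦ v s * (w t * f (x - s - t))) := by
      unfold Function.uncurry
      fun_prop
    exact (h_cont.continuousOn.integrableOn_compact (isCompact_Icc.prod isCompact_Icc)).mono_set
      (Set.prod_mono Set.Ioc_subset_Icc_self Set.Ioc_subset_Icc_self)

lemma unitConv_mono_at {w f g : C(ℝ, ℝ)} {x : ℝ} (hw : ∀ u ∈ Set.Icc 0 1, 0 ≤ w u)
    (h : ∀ u ∈ Set.Icc (0 : ℝ) 1, f (x - u) ≤ g (x - u)) : unitConv w f x ≤ unitConv w g x :=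
  integral_mono_on zero_le_one (Continuous.intervalIntegrable (by fun_prop) _ _)
    (Continuous.intervalIntegrable (by fun_prop) _ _)
    fun u hu ↦ mul_le_mul_of_nonneg_left (h u hu) (hw u hu)

lemma unitConv_mono {w : C(ℝ, ℝ)} (hw : ∀ u ∈ Set.Icc 0 1, 0 ≤ w u) : Monotone (unitConv w) :=
  fun _ _ h _ ↦ unitConv_mono_at hw fun _ _ ↦ h _

lemma unitConv_mem_Icc {w f : C(ℝ, ℝ)} {a b x : ℝ} (hw : ∀ u ∈ Set.Icc 0 1, 0 ≤ w u)
    (h_int : ∫ u in (0 : ℝ)..1, w u = 1) (h : ∀ u ∈ Set.Icc (0 : ℝ) 1, f (x - u) ∈ Set.Icc a b) :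
    unitConv w f x ∈ Set.Icc a b := by
  have h_const (c : ℝ) : unitConv w (c • 1) x = c := by
    rw [map_smul, unitConv_one, h_int, one_smul, ContinuousMap.smul_apply,
      ContinuousMap.one_apply, smul_eq_mul, mul_one]
  constructor
  · exact (h_const a).symm.trans_le <| unitConv_mono_at hw fun u hu ↦ by simpa using (h u hu).1
  · exact (unitConv_mono_at hw fun u hu ↦ by simpa using (h u hu).2).trans_eq (h_const b)

end UnitConv

section UnifConv

open intervalIntegral

/-- Convolution with the uniform distribution on `[0, 1]`. -/
noncomputable def unifConv : Module.End ℝ C(ℝ, ℝ) := unitConv 1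

/-- Convolution with the Beta(2, 2) distribution, which is the zero-bias transform of the uniform
distribution on `[0, 1]` about its mean. -/
noncomputable def zeroBiasConv : Module.End ℝ C(ℝ, ℝ) :=
  unitConv ⟨fun u ↦ 6 * u * (1 - u), by fun_prop⟩

lemma unifConv_mem_Icc {f : C(ℝ, ℝ)} {a b x : ℝ}
    (h : ∀ u ∈ Set.Icc (0 : ℝ) 1, f (x - u) ∈ Set.Icc a b) : unifConv f x ∈ Set.Icc a b :=
  unitConv_mem_Icc (fun _ _ ↦ zero_le_one) (by simp) h

lemma betaDensity_nonneg {u : ℝ} (hu : u ∈ Set.Icc 0 1) : 0 ≤ 6 * u * (1 - u) :=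
  mul_nonneg (mul_nonneg (by norm_num) hu.1) (sub_nonneg.2 hu.2)

lemma integral_betaDensity : ∫ u in (0 : ℝ)..1, 6 * u * (1 - u) = 1 := by
  have h_deriv (u : ℝ) : HasDerivAt (fun u : ℝ ↦ 3 * u ^ 2 - 2 * u ^ 3) (6 * u * (1 - u)) u :=
    (((hasDerivAt_pow 2 u).const_mul 3).sub ((hasDerivAt_pow 3 u).const_mul 2)).congr_deriv
      (by push_cast; ring)
  rw [integral_eq_sub_of_hasDerivAt (fun u _ ↦ h_deriv u)
    (Continuous.intervalIntegrable (by fun_prop) _ _)]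
  norm_num

lemma zeroBiasConv_mem_Icc {f : C(ℝ, ℝ)} {a b x : ℝ}
    (h : ∀ u ∈ Set.Icc (0 : ℝ) 1, f (x - u) ∈ Set.Icc a b) : zeroBiasConv f x ∈ Set.Icc a b :=
  unitConv_mem_Icc (fun _ ↦ betaDensity_nonneg) integral_betaDensity h

lemma zeroBiasConv_one : zeroBiasConv 1 = 1 :=
  (unitConv_one _).trans <| by simp only [ContinuousMap.coe_mk, integral_betaDensity, one_smul]

lemma unifConv_pow_mono (n : ℕ) : Monotone (unifConv ^ n) := by
  rw [Module.End.coe_pow]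
  exact (unitConv_mono fun _ _ ↦ zero_le_one).iterate n

lemma unifConv_pow_one (n : ℕ) : (unifConv ^ n) 1 = 1 := by
  have h_fixed : unifConv 1 = 1 := (unitConv_one 1).trans <| by simp
  rw [Module.End.pow_apply]
  exact Function.iterate_fixed h_fixed n

lemma unifConv_pow_succ_apply (n : ℕ) (f : C(ℝ, ℝ)) :
    (unifConv ^ (n + 1)) f = unifConv ((unifConv ^ n) f) := by
  rw [pow_succ', Module.End.mul_apply]

lemma unifConv_pow_zeroBiasConv (n : ℕ) (f : C(ℝ, ℝ)) :
    (unifConv ^ n) (zeroBiasConv f) = zeroBiasConv ((unifConv ^ n) f) :=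
  LinearMap.congr_fun ((unitConv_commute 1 _).pow_left n).eq f

lemma unifConv_apply (f : C(ℝ, ℝ)) (x : ℝ) : unifConv f x = ∫ u in (0 : ℝ)..1, f (x - u) := by
  simp [unifConv, unitConv_apply]

lemma unifConv_eq_sub_of_hasDerivAt {f g : C(ℝ, ℝ)} (h : ∀ x, HasDerivAt f (g x) x) (x : ℝ) :
    unifConv g x = f x - f (x - 1) := by
  rw [unifConv_apply, integral_comp_sub_left (fun t ↦ g t), sub_zero]
  exact integral_eq_sub_of_hasDerivAt (fun t _ ↦ h t) (g.continuous.intervalIntegrable _ _)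

lemma hasDerivAt_unifConv (f : C(ℝ, ℝ)) (x : ℝ) :
    HasDerivAt (unifConv f) (f x - f (x - 1)) x := by
  have h_eq : ⇑(unifConv f) = fun x ↦ (∫ t in (0 : ℝ)..x, f t) - ∫ t in (0 : ℝ)..(x - 1), f t := by
    ext x
    rw [unifConv_apply, integral_comp_sub_left (fun t ↦ f t), sub_zero, integral_interval_sub_left]
      <;> exact f.continuous.intervalIntegrable _ _
  rw [h_eq]
  exact (f.continuous.integral_hasStrictDerivAt 0 x).hasDerivAt.sub <|
    (f.continuous.integral_hasStrictDerivAt 0 (x - 1)).hasDerivAt.comp_sub_const x 1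

lemma hasDerivAt_unifConv_pow {f g : C(ℝ, ℝ)} (h : ∀ x, HasDerivAt f (g x) x) (n : ℕ) (x : ℝ) :
    HasDerivAt ((unifConv ^ n) f) ((unifConv ^ n) g x) x := by
  induction n generalizing x with
  | zero => exact h x
  | succ n ih =>
    rw [unifConv_pow_succ_apply, unifConv_pow_succ_apply, unifConv_eq_sub_of_hasDerivAt ih]
    exact hasDerivAt_unifConv _ x

end UnifConv

section ZeroBias

open intervalIntegral

lemma unifConv_id_mul {f g : C(ℝ, ℝ)} (h : ∀ x, HasDerivAt f (g x) x) :
    unifConv (.id ℝ * f) =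
      .id ℝ * unifConv f - (1 / 2 : ℝ) • unifConv f + (1 / 12 : ℝ) • zeroBiasConv g := by
  ext x
  have h_deriv (u : ℝ) : HasDerivAt (fun u ↦ u * (1 - u) / 2 * f (x - u))
      ((x - u) * f (x - u) - (x - 1 / 2) * f (x - u) - 1 / 12 * (6 * u * (1 - u) * g (x - u)))
      u := by
    have h_weight : HasDerivAt (fun u : ℝ ↦ u * (1 - u) / 2) (1 / 2 - u) u :=
      (((hasDerivAt_id u).mul ((hasDerivAt_id u).const_sub 1)).div_const 2).congr_deriv
        (by simp; ring)
    exact (h_weight.mul ((h (x - u)).comp_const_sub x u)).congr_deriv (by ring)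
  have h_parts := integral_eq_sub_of_hasDerivAt (a := 0) (b := 1) (fun u _ ↦ h_deriv u)
    (Continuous.intervalIntegrable (by fun_prop) _ _)
  rw [integral_sub (Continuous.intervalIntegrable (by fun_prop) _ _)
    (Continuous.intervalIntegrable (by fun_prop) _ _),
    integral_sub (Continuous.intervalIntegrable (by fun_prop) _ _)
    (Continuous.intervalIntegrable (by fun_prop) _ _), integral_const_mul, integral_const_mul]
    at h_parts
  simp only [ContinuousMap.add_apply, ContinuousMap.sub_apply, ContinuousMap.mul_apply,
    ContinuousMap.smul_apply, smul_eq_mul, ContinuousMap.id_apply, unifConv_apply, zeroBiasConv,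
    unitConv_apply, ContinuousMap.coe_mk]
  linear_combination h_parts

lemma unifConv_pow_id_mul {f g : C(ℝ, ℝ)} (h : ∀ x, HasDerivAt f (g x) x) (n : ℕ) :
    (unifConv ^ (n + 1)) (.id ℝ * f) =
      .id ℝ * (unifConv ^ (n + 1)) f - ((n + 1) / 2 : ℝ) • (unifConv ^ (n + 1)) f +
        ((n + 1) / 12 : ℝ) • (unifConv ^ n) (zeroBiasConv g) := by
  induction n with
  | zero => simpa using unifConv_id_mul h
  | succ n ih =>
    rw [unifConv_pow_succ_apply, ih, map_add, map_sub, map_smul, map_smul,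
      unifConv_id_mul (hasDerivAt_unifConv_pow h (n + 1)), ← unifConv_pow_zeroBiasConv,
      ← unifConv_pow_succ_apply, ← unifConv_pow_succ_apply]
    push_cast
    module

lemma unifConv_pow_id (n : ℕ) : (unifConv ^ n) (.id ℝ) = .id ℝ - (n / 2 : ℝ) • 1 := by
  cases n with
  | zero => simp
  | succ n =>
    have h := unifConv_pow_id_mul (f := 1) (g := 0) (fun x ↦ hasDerivAt_const x 1) n
    simpa [unifConv_pow_one] using h

lemma unifConv_pow_sub_sq (n : ℕ) (a x : ℝ) :
    (unifConv ^ n) ((.id ℝ - a • 1) ^ 2) x = (x - n / 2 - a) ^ 2 + n / 12 := by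
  cases n with
  | zero => simp
  | succ n =>
    have h_deriv (x : ℝ) : HasDerivAt (.id ℝ - (2 * a) • 1 : C(ℝ, ℝ)) ((1 : C(ℝ, ℝ)) x) x :=
      (hasDerivAt_id x).sub_const (2 * a * 1)
    have h_sq : (.id ℝ - a • 1 : C(ℝ, ℝ)) ^ 2 =
        .id ℝ * (.id ℝ - (2 * a) • 1) + (a ^ 2) • 1 := by
      ext y
      simp
      ring
    rw [h_sq, map_add, unifConv_pow_id_mul h_deriv, map_sub, map_smul, map_smul, unifConv_pow_id,
      unifConv_pow_one, zeroBiasConv_one, unifConv_pow_one]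
    simp
    ring

end ZeroBias

section IrwinHall

open intervalIntegral

/-- The cumulative distribution function of the uniform distribution on `[0, 1]`. -/
noncomputable def ramp : C(ℝ, ℝ) := ⟨fun x ↦ max 0 (min x 1), by fun_prop⟩

lemma ramp_mono : Monotone ramp := fun _ _ h ↦ max_le_max le_rfl (min_le_min_right 1 h)

lemma ramp_nonneg (x : ℝ) : 0 ≤ ramp x := le_max_left 0 _

lemma ramp_le_one (x : ℝ) : ramp x ≤ 1 := max_le zero_le_one (min_le_right x 1)

lemma ramp_of_nonpos {x : ℝ} (hx : x ≤ 0) : ramp x = 0 := max_eq_left ((min_le_left x 1).trans hx)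

lemma ramp_of_one_le {x : ℝ} (hx : 1 ≤ x) : ramp x = 1 := by
  simp [ramp, hx]

lemma ramp_eq_max_sub_max (x : ℝ) : ramp x = max x 0 - max (x - 1) 0 := by
  rw [ramp, ContinuousMap.coe_mk]
  grind

lemma integral_max_zero (x : ℝ) : ∫ t in (0 : ℝ)..x, max t 0 = x * max x 0 / 2 := by
  rcases le_total 0 x with hx | hx
  · have h_eq : Set.EqOn (fun t : ℝ ↦ max t 0) id (Set.uIcc 0 x) := fun t ht ↦
      max_eq_left (Set.uIcc_of_le hx ▸ ht).1
    rw [integral_congr h_eq, max_eq_left hx]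
    simp only [id, integral_id]
    ring
  · have h_eq : Set.EqOn (fun t : ℝ ↦ max t 0) (fun _ ↦ 0) (Set.uIcc 0 x) := fun t ht ↦
      max_eq_right (Set.uIcc_of_ge hx ▸ ht).2
    rw [integral_congr h_eq, max_eq_right hx, integral_zero, mul_zero, zero_div]

lemma integral_max_zero_sub (x : ℝ) :
    ∫ u in (0 : ℝ)..1, max (x - u) 0 = (x * max x 0 - (x - 1) * max (x - 1) 0) / 2 := by
  rw [integral_comp_sub_left (fun t ↦ max t 0), sub_zero, ← integral_interval_sub_left (a := 0),
    integral_max_zero, integral_max_zero, sub_div] <;>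
    exact Continuous.intervalIntegrable (by fun_prop) _ _

lemma two_mul_unifConv_ramp (x : ℝ) :
    2 * unifConv ramp x = x * ramp x + (2 - x) * ramp (x - 1) := by
  simp only [unifConv_apply, ramp_eq_max_sub_max, sub_right_comm x _ 1]
  rw [integral_sub (Continuous.intervalIntegrable (by fun_prop) _ _)
    (Continuous.intervalIntegrable (by fun_prop) _ _), integral_max_zero_sub,
    integral_max_zero_sub]
  ring

/-- The cumulative distribution function of the sum of `m + 1` independent uniform variables on
`[0, 1]`; the shift in the index makes it continuous for every `m : ℕ`. -/
noncomputable def irwinHallCDF (m : ℕ) : C(ℝ, ℝ) := (unifConv ^ m) ramp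

lemma irwinHallCDF_zero : irwinHallCDF 0 = ramp := rfl

lemma irwinHallCDF_succ (m : ℕ) : irwinHallCDF (m + 1) = unifConv (irwinHallCDF m) :=
  unifConv_pow_succ_apply m ramp

/- For `m + 1` this is the recursion for `m`, integrated over a unit interval: by that recursion,
`x * irwinHallCDF (m + 1) x` has a derivative involving only shifts of the two functions. -/
lemma irwinHallCDF_succ_apply (m : ℕ) (x : ℝ) :
    (m + 2) * irwinHallCDF (m + 1) x =
      x * irwinHallCDF m x + (m + 2 - x) * irwinHallCDF m (x - 1) := by
  induction m generalizing x with
  | zero => simpa [irwinHallCDF_succ, irwinHallCDF_zero] using two_mul_unifConv_ramp x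
  | succ m ih =>
    let τ : C(ℝ, ℝ) := ⟨fun x ↦ x - 1, by fun_prop⟩
    have h_deriv (y : ℝ) : HasDerivAt (.id ℝ * irwinHallCDF (m + 1) : C(ℝ, ℝ))
        (((m + 3 : ℝ) • irwinHallCDF (m + 1) - (m + 2 : ℝ) • (irwinHallCDF m).comp τ) y) y := by
      refine ((hasDerivAt_id y).mul
        (irwinHallCDF_succ m ▸ hasDerivAt_unifConv (irwinHallCDF m) y)).congr_deriv ?_
      simp [τ]
      linear_combination -ih y
    have h_shift : unifConv ((irwinHallCDF m).comp τ) x = irwinHallCDF (m + 1) (x - 1) := by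
      simp [irwinHallCDF_succ, unifConv_apply, τ, sub_right_comm]
    have h_ftc := unifConv_eq_sub_of_hasDerivAt h_deriv x
    simp only [map_sub, map_smul, ContinuousMap.sub_apply, ContinuousMap.smul_apply, smul_eq_mul,
      ContinuousMap.mul_apply, ContinuousMap.id_apply, h_shift, ← irwinHallCDF_succ] at h_ftc
    push_cast
    linear_combination h_ftc

lemma sum_ite_des_lt (m : ℕ) (c : ℤ) :
    ∑ π : Equiv.Perm (Fin (m + 1)), (if (des π : ℤ) < c then (1 : ℝ) else 0) =
      (m + 1).factorial * irwinHallCDF m c := by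
  induction m generalizing c with
  | zero =>
    have h_des (π : Equiv.Perm (Fin 1)) : des π = 0 := rfl
    rcases lt_or_ge 0 c with hc | hc
    · simp [h_des, irwinHallCDF_zero, hc, ramp_of_one_le (x := c) (mod_cast hc)]
    · simp [h_des, irwinHallCDF_zero, hc.not_gt, ramp_of_nonpos (x := c) (mod_cast hc)]
  | succ m ih =>
    have h_split (d : ℕ) : (d + 1 : ℝ) * (if (d : ℤ) < c then 1 else 0) +
        (m + 1 - d) * (if ((d + 1 : ℕ) : ℤ) < c then 1 else 0) =
        c * (if (d : ℤ) < c then 1 else 0) +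
          (m + 2 - c) * (if (d : ℤ) < c - 1 then 1 else 0) := by
      rcases lt_trichotomy (d : ℤ) (c - 1) with h | h | h
      · rw [if_pos (by lia), if_pos (by lia), if_pos h]
        ring
      · have hd : (d : ℝ) = c - 1 := mod_cast h
        rw [if_pos (by lia), if_neg (by lia), if_neg h.not_lt, hd]
        ring
      · rw [if_neg (by lia), if_neg (by lia), if_neg h.not_gt]
        ring
    rw [sum_des_perm_succ m fun d ↦ if (d : ℤ) < c then (1 : ℝ) else 0]
    simp only [h_split]
    rw [sum_add_distrib, ← mul_sum, ← mul_sum, ih, ih, Nat.factorial_succ (m + 1)]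
    push_cast
    linear_combination -((m + 1).factorial : ℝ) * irwinHallCDF_succ_apply m c

end IrwinHall

section Gaussian

open MeasureTheory ProbabilityTheory Filter

local notation "φ" => gaussianPDFReal 0 1

lemma gaussianPDFReal_zero_one_apply (t : ℝ) :
    φ t = (√(2 * Real.pi))⁻¹ * Real.exp (-t ^ 2 / 2) := by
  simp [gaussianPDFReal]

lemma gaussianPDFReal_zero_one_pos (t : ℝ) : 0 < φ t := gaussianPDFReal_pos 0 1 t one_ne_zero

lemma gaussianPDFReal_zero_one_neg (t : ℝ) : φ (-t) = φ t := by
  simp [gaussianPDFReal]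

lemma gaussianPDFReal_zero_one_le_one (t : ℝ) : φ t ≤ 1 := by
  rw [gaussianPDFReal_zero_one_apply]
  refine mul_le_one₀ (inv_le_one_of_one_le₀ ?_) (Real.exp_pos _).le (Real.exp_le_one_iff.2 ?_)
  · exact Real.one_le_sqrt.2 (by linarith [Real.pi_gt_three])
  · linarith [sq_nonneg t]

lemma hasDerivAt_gaussianPDFReal_zero_one (t : ℝ) : HasDerivAt φ (-t * φ t) t := by
  have h_exponent : HasDerivAt (fun t : ℝ ↦ -t ^ 2 / 2) (-t) t :=
    ((hasDerivAt_pow 2 t).neg.div_const 2).congr_deriv (by simp; ring)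
  rw [funext gaussianPDFReal_zero_one_apply]
  exact (h_exponent.exp.const_mul _).congr_deriv (by ring)

lemma continuous_gaussianPDFReal_zero_one : Continuous φ :=
  continuous_iff_continuousAt.2 fun t ↦ (hasDerivAt_gaussianPDFReal_zero_one t).continuousAt

lemma integrable_neg_mul_gaussianPDFReal_zero_one : Integrable fun t ↦ -t * φ t := by
  refine ((integrable_mul_exp_neg_mul_sq (b := 1 / 2) (by norm_num)).const_mul
    (-(√(2 * Real.pi))⁻¹)).congr (.of_forall fun t ↦ ?_)
  simp only [gaussianPDFReal_zero_one_apply]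
  ring_nf

lemma tendsto_gaussianPDFReal_zero_one_atBot : Tendsto φ atBot (nhds 0) := by
  have h_sq : Tendsto (fun t : ℝ ↦ t ^ 2) atBot atTop := by
    simpa only [sq, id] using tendsto_id.atBot_mul_atBot₀ tendsto_id
  have h_exponent : Tendsto (fun t : ℝ ↦ -t ^ 2 / 2) atBot atBot :=
    (tendsto_neg_atTop_atBot.comp h_sq).atBot_div_const two_pos
  rw [funext gaussianPDFReal_zero_one_apply]
  simpa using (Real.tendsto_exp_atBot.comp h_exponent).const_mul (√(2 * Real.pi))⁻¹

lemma stdNormalCDF_eq_integral (x : ℝ) : stdNormalCDF x = ∫ t in Set.Iic x, φ t := by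
  simp only [stdNormalCDF, gaussianPDFReal_zero_one_apply, one_div]

lemma stdNormalCDF_eq_measureReal (x : ℝ) :
    stdNormalCDF x = (gaussianReal 0 1).real (Set.Iic x) := by
  rw [stdNormalCDF_eq_integral, measureReal_def, gaussianReal_apply_eq_integral 0 one_ne_zero,
    ENNReal.toReal_ofReal (integral_nonneg fun t ↦ (gaussianPDFReal_zero_one_pos t).le)]

lemma stdNormalCDF_mono : Monotone stdNormalCDF := fun x y h ↦ by
  rw [stdNormalCDF_eq_measureReal, stdNormalCDF_eq_measureReal]
  exact measureReal_mono (Set.Iic_subset_Iic.2 h)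

lemma stdNormalCDF_sub_le {x y : ℝ} (h : x ≤ y) : stdNormalCDF y - stdNormalCDF x ≤ y - x := by
  have h_int : Integrable φ := integrable_gaussianPDFReal 0 1
  rw [stdNormalCDF_eq_integral, stdNormalCDF_eq_integral,
    intervalIntegral.integral_Iic_sub_Iic h_int.integrableOn h_int.integrableOn]
  calc ∫ t in x..y, φ t ≤ ∫ _ in x..y, (1 : ℝ) :=
        intervalIntegral.integral_mono_on h h_int.intervalIntegrable (by simp)
          fun t _ ↦ gaussianPDFReal_zero_one_le_one t
    _ = y - x := by simp

lemma lipschitzWith_stdNormalCDF : LipschitzWith 1 stdNormalCDF :=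
  .of_le_add fun x y ↦ by
    rcases le_total x y with h | h
    · exact (stdNormalCDF_mono h).trans (le_add_of_nonneg_right dist_nonneg)
    · rw [Real.dist_eq, abs_of_nonneg (sub_nonneg.2 h), ← sub_le_iff_le_add']
      exact stdNormalCDF_sub_le h

lemma stdNormalCDF_le_three_mul_gaussianPDFReal {w : ℝ} (hw : w ≤ 0) :
    stdNormalCDF w ≤ 3 * φ w := by
  have h_int : Integrable fun t ↦ φ (t - w) * (√(2 * Real.pi) * φ w) :=
    ((integrable_gaussianPDFReal 0 1).comp_sub_right w).mul_const _
  have h_le (t : ℝ) (ht : t ∈ Set.Iic w) : φ t ≤ φ (t - w) * (√(2 * Real.pi) * φ w) := by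
    have h_exp : Real.exp (-t ^ 2 / 2) ≤
        Real.exp (-(t - w) ^ 2 / 2) * Real.exp (-w ^ 2 / 2) := by
      rw [← Real.exp_add, Real.exp_le_exp]
      nlinarith [mul_nonneg_of_nonpos_of_nonpos hw (sub_nonpos.2 ht)]
    simp only [gaussianPDFReal_zero_one_apply]
    rw [mul_inv_cancel_left₀ (by positivity), mul_assoc]
    gcongr
  have h_sqrt : √(2 * Real.pi) ≤ 3 := Real.sqrt_le_iff.2 ⟨by norm_num, by linarith [Real.pi_lt_d2]⟩
  calc stdNormalCDF w = ∫ t in Set.Iic w, φ t := stdNormalCDF_eq_integral w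
    _ ≤ ∫ t in Set.Iic w, φ (t - w) * (√(2 * Real.pi) * φ w) :=
        setIntegral_mono_on (integrable_gaussianPDFReal 0 1).integrableOn h_int.integrableOn
          measurableSet_Iic h_le
    _ ≤ ∫ t, φ (t - w) * (√(2 * Real.pi) * φ w) :=
        setIntegral_le_integral h_int <| .of_forall fun t ↦ by
          have := gaussianPDFReal_zero_one_pos
          exact mul_nonneg (this _).le (mul_nonneg (Real.sqrt_nonneg _) (this w).le)
    _ = √(2 * Real.pi) * φ w := by
        rw [integral_mul_const, integral_sub_right_eq_self φ w,
          integral_gaussianPDFReal_eq_one 0 one_ne_zero, one_mul]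
    _ ≤ 3 * φ w := mul_le_mul_of_nonneg_right h_sqrt (gaussianPDFReal_zero_one_pos w).le

lemma neg_mul_stdNormalCDF_le_gaussianPDFReal (w : ℝ) : -w * stdNormalCDF w ≤ φ w := by
  calc -w * stdNormalCDF w = ∫ t in Set.Iic w, -w * φ t := by
        rw [stdNormalCDF_eq_integral, integral_const_mul]
    _ ≤ ∫ t in Set.Iic w, -t * φ t :=
        setIntegral_mono_on ((integrable_gaussianPDFReal 0 1).const_mul _).integrableOn
          integrable_neg_mul_gaussianPDFReal_zero_one.integrableOn measurableSet_Iic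
          fun t ht ↦ mul_le_mul_of_nonneg_right (neg_le_neg ht) (gaussianPDFReal_zero_one_pos t).le
    _ = φ w - 0 := integral_Iic_of_hasDerivAt_of_tendsto'
        (fun t _ ↦ hasDerivAt_gaussianPDFReal_zero_one t)
        integrable_neg_mul_gaussianPDFReal_zero_one.integrableOn
        tendsto_gaussianPDFReal_zero_one_atBot
    _ = φ w := sub_zero _

lemma abs_integral_Iic_mul_le_stdNormalCDF {q : ℝ → ℝ} (hq : ∀ t, |q t| ≤ 1) (w : ℝ) :
    |∫ t in Set.Iic w, φ t * q t| ≤ stdNormalCDF w := by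
  rw [stdNormalCDF_eq_integral, ← Real.norm_eq_abs]
  refine norm_integral_le_of_norm_le (integrable_gaussianPDFReal 0 1).integrableOn <|
    .of_forall fun t ↦ ?_
  have h_pos := gaussianPDFReal_zero_one_pos t
  rw [norm_mul, Real.norm_of_nonneg h_pos.le]
  exact mul_le_of_le_one_right h_pos.le (hq t)

lemma integrable_gaussianPDFReal_mul {q : ℝ → ℝ} (hq_cont : Continuous q)
    (hq : ∀ t, |q t| ≤ 1) : Integrable fun t ↦ φ t * q t :=
  (integrable_gaussianPDFReal 0 1).mul_bdd (c := 1) hq_cont.aestronglyMeasurable (.of_forall hq)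

lemma abs_integral_Iic_mul_le_stdNormalCDF_neg_abs {q : ℝ → ℝ} (hq_cont : Continuous q)
    (hq : ∀ t, |q t| ≤ 1) (hq_mean : ∫ t, q t ∂gaussianReal 0 1 = 0) (w : ℝ) :
    |∫ t in Set.Iic w, φ t * q t| ≤ stdNormalCDF (-|w|) := by
  rcases le_total w 0 with hw | hw
  · rw [abs_of_nonpos hw, neg_neg]
    exact abs_integral_Iic_mul_le_stdNormalCDF hq w
  · have h_int := (integrable_gaussianPDFReal_mul hq_cont hq).integrableOn (s := Set.univ)
    have h_reflect : ∫ t in Set.Iic w, φ t * q t = -∫ t in Set.Iic (-w), φ t * q (-t) := by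
      have h_sum := intervalIntegral.integral_Iic_add_Ioi (b := w) (f := fun t ↦ φ t * q t)
        (h_int.mono_set (Set.subset_univ _)) (h_int.mono_set (Set.subset_univ _))
      have h_mean : ∫ t, φ t * q t = 0 :=
        (integral_gaussianReal_eq_integral_smul one_ne_zero).symm.trans hq_mean
      have h_neg : ∫ t in Set.Iic (-w), φ t * q (-t) = ∫ t in Set.Ioi w, φ t * q t := by
        rw [← neg_neg w, ← integral_comp_neg_Iic, neg_neg]
        simp only [gaussianPDFReal_zero_one_neg]
      linarith
    rw [h_reflect, abs_neg, abs_of_nonneg hw]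
    exact abs_integral_Iic_mul_le_stdNormalCDF (fun t ↦ hq (-t)) (-w)

/-- `F` solves Stein's equation `F' w - w * F w = q w`, with the bounds that hold for the bounded
solution when `|q| ≤ 1`. -/
structure IsSteinSolution (F q : C(ℝ, ℝ)) : Prop where
  hasDerivAt (w : ℝ) : HasDerivAt F (w * F w + q w) w
  abs_le_three (w : ℝ) : |F w| ≤ 3
  abs_mul_le_one (w : ℝ) : |w * F w| ≤ 1

lemma hasDerivAt_integral_Iic {f : ℝ → ℝ} (hf : Continuous f) (hf_int : Integrable f) (w : ℝ) :
    HasDerivAt (fun w ↦ ∫ t in Set.Iic w, f t) (f w) w := by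
  have h_eq (w : ℝ) :
      ∫ t in Set.Iic w, f t = (∫ t in Set.Iic 0, f t) + ∫ t in (0 : ℝ)..w, f t := by
    rw [← intervalIntegral.integral_Iic_sub_Iic hf_int.integrableOn hf_int.integrableOn,
      add_sub_cancel]
  rw [funext h_eq]
  exact (hf.integral_hasStrictDerivAt 0 w).hasDerivAt.const_add _

lemma exists_isSteinSolution {q : C(ℝ, ℝ)} (hq : ∀ t, |q t| ≤ 1)
    (hq_mean : ∫ t, q t ∂gaussianReal 0 1 = 0) : ∃ F, IsSteinSolution F q := by
  have h_pos := gaussianPDFReal_zero_one_pos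
  have h_deriv (w : ℝ) : HasDerivAt (fun w ↦ (∫ t in Set.Iic w, φ t * q t) / φ w)
      (w * ((∫ t in Set.Iic w, φ t * q t) / φ w) + q w) w := by
    have h_cont : Continuous fun t ↦ φ t * q t :=
      continuous_gaussianPDFReal_zero_one.mul q.continuous
    refine ((hasDerivAt_integral_Iic h_cont
      (integrable_gaussianPDFReal_mul q.continuous hq) w).div
      (hasDerivAt_gaussianPDFReal_zero_one w) (h_pos w).ne').congr_deriv ?_
    field_simp [(h_pos w).ne']
    ring
  have h_even (w : ℝ) : φ (-|w|) = φ w := by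
    rcases abs_choice w with h | h <;> simp [h, gaussianPDFReal_zero_one_neg]
  have h_bound := abs_integral_Iic_mul_le_stdNormalCDF_neg_abs q.continuous hq hq_mean
  refine ⟨⟨_, continuous_iff_continuousAt.2 fun w ↦ (h_deriv w).continuousAt⟩, h_deriv,
    fun w ↦ ?_, fun w ↦ ?_⟩
  · rw [ContinuousMap.coe_mk, abs_div, abs_of_pos (h_pos w), div_le_iff₀ (h_pos w), ← h_even]
    exact (h_bound w).trans <|
      stdNormalCDF_le_three_mul_gaussianPDFReal (neg_nonpos.2 (abs_nonneg w))
  · rw [ContinuousMap.coe_mk, abs_mul, abs_div, abs_of_pos (h_pos w), ← mul_div_assoc,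
      div_le_one (h_pos w), ← h_even]
    calc |w| * |∫ t in Set.Iic w, φ t * q t| ≤ |w| * stdNormalCDF (-|w|) :=
          mul_le_mul_of_nonneg_left (h_bound w) (abs_nonneg w)
      _ ≤ φ (-|w|) := by simpa using neg_mul_stdNormalCDF_le_gaussianPDFReal (-|w|)

end Gaussian

section SteinMethod

open MeasureTheory ProbabilityTheory

namespace IsSteinSolution

variable {F q : C(ℝ, ℝ)}

lemma hasDerivAt_mul (hF : IsSteinSolution F q) (w : ℝ) :
    HasDerivAt (fun w ↦ w * F w) (F w + w * (w * F w + q w)) w :=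
  ((hasDerivAt_id w).mul (hF.hasDerivAt w)).congr_deriv (by simp)

lemma abs_mul_sub_mul_le (hF : IsSteinSolution F q) (hq : ∀ t, |q t| ≤ 1) {a b d : ℝ}
    (hab : |a - b| ≤ d) (hd : d ≤ 3) : |a * F a - b * F b| ≤ (10 + b ^ 2) * d := by
  have h_deriv_le (w : ℝ) (hw : w ∈ Set.uIcc b a) : ‖F w + w * (w * F w + q w)‖ ≤ 10 + b ^ 2 := by
    have h_abs : |w| ≤ |b| + 3 := by
      have h_dist := Set.abs_sub_left_of_mem_uIcc hw
      linarith [abs_sub_abs_le_abs_sub w b]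
    have h_deriv : |w * F w + q w| ≤ 2 := by
      linarith [abs_add_le (w * F w) (q w), hF.abs_mul_le_one w, hq w]
    calc ‖F w + w * (w * F w + q w)‖ ≤ |F w| + |w| * |w * F w + q w| :=
          (abs_add_le _ _).trans_eq (by rw [abs_mul w])
      _ ≤ 3 + (|b| + 3) * 2 :=
          add_le_add (hF.abs_le_three w) (mul_le_mul h_abs h_deriv (abs_nonneg _) (by positivity))
      _ ≤ 10 + b ^ 2 := by nlinarith [sq_abs b, sq_nonneg (|b| - 1)]
  calc |a * F a - b * F b| ≤ (10 + b ^ 2) * ‖a - b‖ :=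
        (convex_uIcc b a).norm_image_sub_le_of_norm_hasDerivWithin_le
          (fun w _ ↦ (hF.hasDerivAt_mul w).hasDerivWithinAt) h_deriv_le Set.left_mem_uIcc
          Set.right_mem_uIcc
    _ ≤ (10 + b ^ 2) * d := mul_le_mul_of_nonneg_left hab (by positivity)

end IsSteinSolution

lemma abs_unifConv_sub_zeroBiasConv_le {f : C(ℝ, ℝ)} {x r : ℝ}
    (h : ∀ u ∈ Set.Icc (0 : ℝ) 1, |f (x - u) - f x| ≤ r) :
    |unifConv f x - zeroBiasConv f x| ≤ 2 * r := by
  have h_mem (u : ℝ) (hu : u ∈ Set.Icc (0 : ℝ) 1) : f (x - u) ∈ Set.Icc (f x - r) (f x + r) :=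
    ⟨by linarith [neg_le_of_abs_le (h u hu)], by linarith [le_of_abs_le (h u hu)]⟩
  calc |unifConv f x - zeroBiasConv f x| ≤ (f x + r) - (f x - r) :=
        Real.dist_le_of_mem_Icc (unifConv_mem_Icc h_mem) (zeroBiasConv_mem_Icc h_mem)
    _ = 2 * r := by ring

/-- Standardization of `μ - y`. The sign is reversed because convolution evaluates functions at
`c - S`, which turns into the standardization of the sum `S` when `μ = c - 𝔼 S`. -/
noncomputable def standardize (μ σ : ℝ) : C(ℝ, ℝ) := ⟨fun y ↦ (μ - y) / σ, by fun_prop⟩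

lemma standardize_apply (μ σ y : ℝ) : standardize μ σ y = (μ - y) / σ := rfl

lemma hasDerivAt_standardize (μ σ y : ℝ) : HasDerivAt (standardize μ σ) (-1 / σ) y :=
  ((hasDerivAt_id y).const_sub μ).div_const σ

variable {σ : ℝ} {m : ℕ} {F q : C(ℝ, ℝ)}

lemma abs_unifConv_sub_zeroBiasConv_comp_standardize_le (hF : IsSteinSolution F q)
    (hq : ∀ t, |q t| ≤ 1) (μ : ℝ) (hσ_pos : 0 < σ) (hσ_inv : 1 / σ ≤ 3) :
    |unifConv ((.id ℝ * F).comp (standardize μ σ)) -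
        zeroBiasConv ((.id ℝ * F).comp (standardize μ σ))| ≤
      (2 / σ) • ((10 : ℝ) • 1 + standardize μ σ ^ 2) := fun x ↦ by
  have h_osc (u : ℝ) (hu : u ∈ Set.Icc (0 : ℝ) 1) :
      |(ContinuousMap.id ℝ * F).comp (standardize μ σ) (x - u) -
        (ContinuousMap.id ℝ * F).comp (standardize μ σ) x| ≤
      (10 + standardize μ σ x ^ 2) * (1 / σ) := by
    refine hF.abs_mul_sub_mul_le hq ?_ hσ_inv
    change |(μ - (x - u)) / σ - (μ - x) / σ| ≤ 1 / σ
    rw [← sub_div, abs_div, abs_of_pos hσ_pos]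
    gcongr
    rw [sub_sub_sub_cancel_left, sub_sub_cancel, abs_of_nonneg hu.1]
    exact hu.2
  refine (abs_unifConv_sub_zeroBiasConv_le h_osc).trans_eq ?_
  simp
  ring

lemma unifConv_pow_standardize_sq_le (c : ℝ) (hσ : σ ^ 2 = (m + 2) / 12) :
    (unifConv ^ m) (standardize (c - (m + 1) / 2) σ ^ 2) c ≤ 2 := by
  have h_eq (μ : ℝ) : standardize μ σ ^ 2 = (σ ^ 2)⁻¹ • (.id ℝ - μ • 1) ^ 2 := by
    ext y
    simp [standardize_apply]
    ring
  rw [h_eq, map_smul, ContinuousMap.smul_apply, unifConv_pow_sub_sq, hσ, smul_eq_mul,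
    inv_mul_le_iff₀ (by positivity)]
  ring_nf
  linarith [m.cast_nonneg (α := ℝ)]

/- Stein's identity: after the zero-bias formula, the term in `F' = w F w + q` carries the factor
`(m + 1) / (12 σ ^ 2) = (m + 1) / (m + 2)`. -/
lemma IsSteinSolution.unifConv_pow_zeroBiasConv_eq (hF : IsSteinSolution F q) {c μ : ℝ}
    (hμ : μ = c - (m + 1) / 2) (hσ_pos : 0 < σ) (hσ : σ ^ 2 = (m + 2) / 12) :
    (unifConv ^ m) (zeroBiasConv (q.comp (standardize μ σ))) c =
      (unifConv ^ m) (unifConv ((.id ℝ * F).comp (standardize μ σ)) -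
        zeroBiasConv ((.id ℝ * F).comp (standardize μ σ))) c +
      (unifConv ^ (m + 1)) ((.id ℝ * F).comp (standardize μ σ)) c / (m + 1) := by
  set W := standardize μ σ
  set ψ := (ContinuousMap.id ℝ * F).comp W with hψ
  have h_deriv (y : ℝ) : HasDerivAt (F.comp W) (((-1 / σ) • (ψ + q.comp W)) y) y :=
    ((hF.hasDerivAt (W y)).comp y (hasDerivAt_standardize μ σ y)).congr_deriv (mul_comm _ _)
  have h_id_mul : .id ℝ * F.comp W = μ • F.comp W - σ • ψ := by
    ext y
    simp [hψ, W, standardize_apply]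
    field_simp
    ring
  have h_bias := ContinuousMap.congr_fun (unifConv_pow_id_mul h_deriv m) c
  rw [h_id_mul] at h_bias
  simp only [map_add, map_sub, map_smul, ContinuousMap.add_apply, ContinuousMap.sub_apply,
    ContinuousMap.mul_apply, ContinuousMap.smul_apply, smul_eq_mul, ContinuousMap.id_apply,
    ← Module.End.mul_apply, ← pow_succ] at h_bias ⊢
  subst hμ
  field_simp at h_bias ⊢
  linear_combination h_bias / 2 + 12 * (unifConv ^ (m + 1)) ψ c * hσ

lemma one_div_le_three_of_sq_eq (hσ_pos : 0 < σ) (hσ : σ ^ 2 = (m + 2) / 12) : 1 / σ ≤ 3 := by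
  rw [div_le_iff₀ hσ_pos]
  nlinarith [m.cast_nonneg (α := ℝ)]

lemma abs_unifConv_pow_zeroBiasConv_comp_le {c μ : ℝ} (hq : ∀ t, |q t| ≤ 1)
    (hq_mean : ∫ t, q t ∂gaussianReal 0 1 = 0) (hμ : μ = c - (m + 1) / 2) (hσ_pos : 0 < σ)
    (hσ : σ ^ 2 = (m + 2) / 12) :
    |(unifConv ^ m) (zeroBiasConv (q.comp (standardize μ σ))) c| ≤ 25 / σ := by
  obtain ⟨F, hF⟩ := exists_isSteinSolution hq hq_mean
  have hσ_inv := one_div_le_three_of_sq_eq hσ_pos hσ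
  set W := standardize μ σ with hW
  set ψ := (ContinuousMap.id ℝ * F).comp W
  have h_osc : |(unifConv ^ m) (unifConv ψ - zeroBiasConv ψ) c| ≤ 24 / σ := by
    calc |(unifConv ^ m) (unifConv ψ - zeroBiasConv ψ) c|
        ≤ (unifConv ^ m) ((2 / σ) • ((10 : ℝ) • 1 + W ^ 2)) c :=
          abs_map_le_of_monotone (unifConv_pow_mono m)
            (abs_unifConv_sub_zeroBiasConv_comp_standardize_le hF hq μ hσ_pos hσ_inv) c
      _ = 2 / σ * (10 + (unifConv ^ m) (W ^ 2) c) := by simp [unifConv_pow_one, mul_add]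
      _ ≤ 2 / σ * (10 + 2) := by
          gcongr
          rw [hW, hμ]
          exact unifConv_pow_standardize_sq_le c hσ
      _ = 24 / σ := by ring
  have h_last : |(unifConv ^ (m + 1)) ψ c / (m + 1)| ≤ 1 / σ := by
    have hψ : |ψ| ≤ 1 := fun x ↦ hF.abs_mul_le_one (W x)
    have h_le_one : |(unifConv ^ (m + 1)) ψ c| ≤ 1 := by
      simpa [unifConv_pow_one] using abs_map_le_of_monotone (unifConv_pow_mono (m + 1)) hψ c
    rw [abs_div, abs_of_pos (by positivity : (0 : ℝ) < m + 1)]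
    have : σ ≤ m + 1 := by nlinarith
    gcongr
  rw [hF.unifConv_pow_zeroBiasConv_eq hμ hσ_pos hσ]
  calc _ ≤ 24 / σ + 1 / σ := (abs_add_le _ _).trans (add_le_add h_osc h_last)
    _ = 25 / σ := by ring

lemma abs_unifConv_pow_zeroBiasConv_sub_integral_le {f : C(ℝ, ℝ)} {c μ : ℝ}
    (hf : ∀ x, f x ∈ Set.Icc 0 1) (hμ : μ = c - (m + 1) / 2) (hσ_pos : 0 < σ)
    (hσ : σ ^ 2 = (m + 2) / 12) :
    |(unifConv ^ m) (zeroBiasConv f) c - ∫ t, f (μ - σ * t) ∂gaussianReal 0 1| ≤ 25 / σ := by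
  let h : C(ℝ, ℝ) := ⟨fun t ↦ f (μ - σ * t), by fun_prop⟩
  have h_int : Integrable h (gaussianReal 0 1) :=
    .of_mem_Icc 0 1 h.continuous.aemeasurable (.of_forall fun t ↦ hf _)
  change |_ - ∫ t, h t ∂gaussianReal 0 1| ≤ _
  set N := ∫ t, h t ∂gaussianReal 0 1
  have hN_mem : N ∈ Set.Icc 0 1 := by
    refine ⟨integral_nonneg fun t ↦ (hf _).1, ?_⟩
    simpa using integral_mono h_int (integrable_const 1) fun t ↦ (hf _).2
  have hq (t : ℝ) : |(h - N • 1) t| ≤ 1 := by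
    simpa [h, Real.dist_eq] using Real.dist_le_of_mem_Icc_01 (hf (μ - σ * t)) hN_mem
  have hq_mean : ∫ t, (h - N • 1) t ∂gaussianReal 0 1 = 0 := by
    simp only [ContinuousMap.sub_apply, ContinuousMap.smul_apply, ContinuousMap.one_apply,
      smul_eq_mul, mul_one]
    rw [integral_sub h_int (integrable_const N), integral_const, probReal_univ, one_smul, sub_self]
  have h_comp : (h - N • 1).comp (standardize μ σ) = f - N • 1 := by
    ext y
    simp [h, standardize_apply, mul_div_cancel₀ _ hσ_pos.ne']
  have h_bound := abs_unifConv_pow_zeroBiasConv_comp_le hq hq_mean hμ hσ_pos hσ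
  simpa [h_comp, zeroBiasConv_one, unifConv_pow_one] using h_bound

lemma integral_ramp_sub_mul_mem_Icc (μ : ℝ) (hσ_pos : 0 < σ) :
    ∫ t, ramp (μ - σ * t) ∂gaussianReal 0 1 ∈
      Set.Icc (stdNormalCDF ((μ - 1) / σ)) (stdNormalCDF (μ / σ)) := by
  have h_indicator (a : ℝ) : Integrable ((Set.Iic a).indicator 1) (gaussianReal 0 1) :=
    (integrable_const (1 : ℝ)).indicator measurableSet_Iic
  have h_ramp : Integrable (fun t ↦ ramp (μ - σ * t)) (gaussianReal 0 1) :=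
    .of_mem_Icc 0 1 (by fun_prop) (.of_forall fun t ↦ ⟨ramp_nonneg _, ramp_le_one _⟩)
  rw [stdNormalCDF_eq_measureReal, stdNormalCDF_eq_measureReal,
    ← integral_indicator_one measurableSet_Iic, ← integral_indicator_one measurableSet_Iic]
  constructor
  · refine integral_mono (h_indicator _) h_ramp
      (Set.indicator_le' (fun t ht ↦ (ramp_of_one_le ?_).ge) fun t _ ↦ ramp_nonneg _)
    linarith [(le_div_iff₀' hσ_pos).1 (Set.mem_Iic.1 ht)]
  · refine integral_mono h_ramp (h_indicator _) fun t ↦ ?_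
    by_cases ht : t ≤ μ / σ
    · simpa [ht] using ramp_le_one _
    · simpa [ht] using (ramp_of_nonpos (by linarith [(div_lt_iff₀' hσ_pos).1 (not_le.1 ht)])).le

lemma abs_irwinHallCDF_sub_stdNormalCDF_le (c : ℝ) (hσ_pos : 0 < σ)
    (hσ : σ ^ 2 = (m + 2) / 12) :
    |irwinHallCDF m c - stdNormalCDF ((c - (m + 1) / 2) / σ)| ≤ 26 / σ := by
  set μ := c - (m + 1 : ℝ) / 2 with hμ
  let rampSucc : C(ℝ, ℝ) := ⟨fun x ↦ ramp (x + 1), by fun_prop⟩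
  have h_lower : (unifConv ^ m) (zeroBiasConv ramp) c ≤ irwinHallCDF m c :=
    unifConv_pow_mono m (fun x ↦ (zeroBiasConv_mem_Icc (b := ramp x) fun u hu ↦
      ⟨ramp_nonneg _, ramp_mono (sub_le_self x hu.1)⟩).2) c
  have h_upper : irwinHallCDF m c ≤ (unifConv ^ m) (zeroBiasConv rampSucc) c :=
    unifConv_pow_mono m (fun x ↦ (zeroBiasConv_mem_Icc (a := ramp x) (f := rampSucc) fun u hu ↦
      ⟨ramp_mono (by linarith [hu.2]), ramp_le_one _⟩).1) c
  have h_stein_lower := abs_le.1 <| abs_unifConv_pow_zeroBiasConv_sub_integral_le (f := ramp)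
    (fun x ↦ ⟨ramp_nonneg x, ramp_le_one x⟩) hμ hσ_pos hσ
  have h_stein_upper := abs_le.1 <| abs_unifConv_pow_zeroBiasConv_sub_integral_le (f := rampSucc)
    (fun x ↦ ⟨ramp_nonneg _, ramp_le_one _⟩) hμ hσ_pos hσ
  have h_cdf_lower := (integral_ramp_sub_mul_mem_Icc μ hσ_pos).1
  have h_cdf_upper : ∫ t, rampSucc (μ - σ * t) ∂gaussianReal 0 1 ≤ stdNormalCDF ((μ + 1) / σ) := by
    simpa only [rampSucc, ContinuousMap.coe_mk, sub_add_eq_add_sub] using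
      (integral_ramp_sub_mul_mem_Icc (μ + 1) hσ_pos).2
  have h_cdf_step {a b : ℝ} (hab : b - a = 1) :
      stdNormalCDF (b / σ) - stdNormalCDF (a / σ) ≤ 1 / σ :=
    (stdNormalCDF_sub_le (by gcongr; linarith)).trans_eq (by rw [← sub_div, hab])
  have h_step_lower := h_cdf_step (sub_sub_cancel μ 1)
  have h_step_upper := h_cdf_step (add_sub_cancel_left μ 1)
  have h_add : 26 / σ = 25 / σ + 1 / σ := by ring
  rw [abs_le]
  constructor <;> linarith

end SteinMethod

lemma card_des_lt_div_factorial (m : ℕ) (c : ℤ) :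
    (#{π : Equiv.Perm (Fin (m + 1)) | (des π : ℤ) < c} : ℝ) / (m + 1).factorial =
      irwinHallCDF m c := by
  rw [div_eq_iff (mod_cast (m + 1).factorial_ne_zero), mul_comm, ← sum_ite_des_lt, sum_boole]

lemma standardized_le_iff_lt_floor_add_one {σ : ℝ} (hσ : 0 < σ) (k : ℕ) (μ x : ℝ) :
    (k - μ) / σ ≤ x ↔ (k : ℤ) < ⌊μ + x * σ⌋ + 1 := by
  rw [div_le_iff₀ hσ, Int.lt_add_one_iff, Int.le_floor, Int.cast_natCast, sub_le_iff_le_add']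

lemma abs_floor_add_one_sub_div_sub_le {σ : ℝ} (hσ : 0 < σ) (μ x : ℝ) :
    |(↑(⌊μ + x * σ⌋ + 1) - (μ + 1 / 2)) / σ - x| ≤ 1 / σ := by
  rw [div_sub' hσ.ne', abs_div, abs_of_pos hσ]
  gcongr
  push_cast
  rw [abs_le]
  constructor <;> linarith [Int.floor_le (μ + x * σ), Int.lt_floor_add_one (μ + x * σ)]

lemma abs_card_div_factorial_sub_stdNormalCDF_le {m : ℕ} {σ : ℝ} (hσ_pos : 0 < σ)
    (hσ : σ ^ 2 = (m + 2) / 12) (x : ℝ) :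
    |(#{π : Equiv.Perm (Fin (m + 1)) | ((des π : ℝ) - m / 2) / σ ≤ x} : ℝ) / (m + 1).factorial -
      stdNormalCDF x| ≤ 27 / σ := by
  simp only [standardized_le_iff_lt_floor_add_one hσ_pos]
  rw [card_des_lt_div_factorial]
  set c := ⌊(m / 2 : ℝ) + x * σ⌋ + 1
  have h_shift : |stdNormalCDF ((c - (m + 1) / 2) / σ) - stdNormalCDF x| ≤ 1 / σ := by
    refine (lipschitzWith_stdNormalCDF.dist_le_mul _ x).trans ?_
    rw [NNReal.coe_one, one_mul, add_div]
    exact abs_floor_add_one_sub_div_sub_le hσ_pos (m / 2) x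
  calc |irwinHallCDF m c - stdNormalCDF x| ≤ 26 / σ + 1 / σ :=
        (abs_sub_le _ _ _).trans <|
          add_le_add (abs_irwinHallCDF_sub_stdNormalCDF_le c hσ_pos hσ) h_shift
    _ = 27 / σ := by ring

open scoped Classical in
/-- Berry–Esseen bound for the number of descents of a uniformly random permutation. -/
theorem descents_berry_esseen :
    ∃ C : ℝ, 0 < C ∧ ∀ n : ℕ, 1 ≤ n → ∀ x : ℝ,
      |(((Finset.univ.filter (fun π : Equiv.Perm (Fin n) =>
              ((des π : ℝ) - ((n : ℝ) - 1) / 2) / Real.sqrt (((n : ℝ) + 1) / 12) ≤ x)).card : ℝ)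
            / (Nat.factorial n : ℝ)) - stdNormalCDF x| ≤ C / Real.sqrt n := by
  refine ⟨108, by norm_num, fun n hn x ↦ ?_⟩
  obtain ⟨m, rfl⟩ := Nat.exists_eq_add_of_le' hn
  set σ := √(((m + 1 : ℕ) + 1 : ℝ) / 12)
  have hσ_pos : 0 < σ := by positivity
  have hσ : σ ^ 2 = (m + 2) / 12 := by
    rw [Real.sq_sqrt (by positivity)]
    push_cast
    ring
  have h_sqrt_le : √(m + 1 : ℕ) ≤ 4 * σ := by
    rw [Real.sqrt_le_left (by positivity), mul_pow, hσ]
    push_cast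
    linarith [m.cast_nonneg (α := ℝ)]
  have h_mean : ((m + 1 : ℕ) - 1 : ℝ) / 2 = m / 2 := by rw [Nat.cast_succ, add_sub_cancel_right]
  rw [h_mean]
  calc _ ≤ 27 / σ := abs_card_div_factorial_sub_stdNormalCDF_le hσ_pos hσ x
    _ = 108 / (4 * σ) := by ring
    _ ≤ 108 / √(m + 1 : ℕ) := by gcongr
end

section
/- Let D_n be the number of descents of a uniformly random permutation of S_n. There exists a constant C > 0 such that for all n ≥ 1, | E[(D_n − (n−1)/2)⁴] − n²/48 | ≤ C·n; that is, the fourth central moment of D_n equals 3n²/144 + O(n). -/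
open Finset

/-!
Inserting a new maximum into a word of length `n` with `d` descents keeps the number of descents
in `d + 1` of the `n + 1` positions (inside a descent, or at the end) and raises it by one in the
other `n - d`. Hence, with `X n = D n - (n - 1) / 2` and `h = (n + 1) / 2`, for every function `g`,

  `(n + 1) E[g (X (n + 1))] = E[(h + X n) g (X n - 1 / 2) + (h - X n) g (X n + 1 / 2)]`.

For `g = x ^ 2` and `g = x ^ 4` these are recurrences for the second and fourth central moments,
solved by `(n + 1) / 12` from `n = 2` on and by `(n + 1) (5 n + 3) / 240` from `n = 4` on.
-/

open scoped BigOperators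

section DescentCount

variable {α : Type*}

/-- The number of descents of a word `l`: the number of pairs of consecutive letters, listed by
`l.zip l.tail`, whose second entry is the smaller one. -/
def descentCount [LT α] [DecidableLT α] (l : List α) : ℕ :=
  (l.zip l.tail).countP fun p => p.2 < p.1

lemma descentCount_singleton [LT α] [DecidableLT α] (a : α) : descentCount [a] = 0 := by
  simp [descentCount]

lemma descentCount_cons_cons [LT α] [DecidableLT α] (a b : α) (l : List α) :
    descentCount (a :: b :: l) = descentCount (b :: l) + if b < a then 1 else 0 := by
  simp [descentCount, List.countP_cons]

lemma descentCount_le_length_tail [LT α] [DecidableLT α] (l : List α) :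
    descentCount l ≤ l.tail.length :=
  List.countP_le_length.trans (by simp)

variable [Preorder α] [DecidableLT α]

-- Keeping a first letter `y` in front of the insertion is what makes induction on `l` go through.
-- The subtraction does not truncate, by `descentCount_le_length_tail`.
open scoped List in
lemma map_descentCount_cons_permutations'Aux {t : α} (y : α) (l : List α)
    (h : ∀ x ∈ y :: l, x < t) :
    (l.permutations'Aux t).map (fun w => descentCount (y :: w)) ~
      List.replicate (descentCount (y :: l) + 1) (descentCount (y :: l)) ++
        List.replicate (l.length - descentCount (y :: l)) (descentCount (y :: l) + 1) := by
  induction l generalizing y with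
  | nil =>
    have hy : ¬ t < y := (h y (by simp)).not_gt
    simp [List.permutations'Aux, descentCount_singleton, descentCount_cons_cons, hy]
  | cons z l ih =>
    have hy : ¬ t < y := (h y (by simp)).not_gt
    have hz : z < t := h z (by simp)
    have hle : descentCount (z :: l) ≤ l.length := descentCount_le_length_tail (z :: l)
    have insert_behind_z := (ih z fun x hx => h x (by simp [hx])).map (· + if z < y then 1 else 0)
    simp only [List.map_map, Function.comp_def, List.map_append,
      List.map_replicate] at insert_behind_z
    simp only [List.permutations'Aux, List.map_cons, List.map_map, Function.comp_def,
      descentCount_cons_cons, hy, hz, if_true, if_false, List.length_cons]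
    refine (insert_behind_z.cons _).trans ?_
    split_ifs <;> simp only [add_zero]
    · simp [List.replicate_succ]
    · rw [Nat.succ_sub hle]
      exact List.perm_middle.symm

open scoped List in
lemma map_descentCount_permutations'Aux {t : α} {l : List α} (h : ∀ x ∈ l, x < t) :
    (l.permutations'Aux t).map descentCount ~
      List.replicate (descentCount l + 1) (descentCount l) ++
        List.replicate (l.length - descentCount l) (descentCount l + 1) := by
  cases l with
  | nil => simp [List.permutations'Aux, descentCount]
  | cons y l =>
    have hle : descentCount (y :: l) ≤ l.length := descentCount_le_length_tail (y :: l)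
    have insert_behind_y := map_descentCount_cons_permutations'Aux y l h
    simp only [List.permutations'Aux, List.map_cons, List.map_map, Function.comp_def,
      descentCount_cons_cons t y, h y (by simp), if_true, List.length_cons]
    refine (insert_behind_y.cons _).trans ?_
    rw [Nat.succ_sub hle]
    exact List.perm_middle.symm

lemma sum_map_descentCount_permutations'_cons {R : Type*} [Ring R] {t : α} {l : List α}
    (h : ∀ x ∈ l, x < t) (f : ℕ → R) :
    ((t :: l).permutations'.map fun w => f (descentCount w)).sum =
      (l.permutations'.map fun w => ((descentCount w : R) + 1) * f (descentCount w) +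
        ((l.length : R) - descentCount w) * f (descentCount w + 1)).sum := by
  have insert_sum (w) (hw : w ∈ l.permutations') :
      ((w.permutations'Aux t).map fun v => f (descentCount v)).sum =
        ((descentCount w : R) + 1) * f (descentCount w) +
          ((l.length : R) - descentCount w) * f (descentCount w + 1) := by
    have hwl : w.Perm l := List.mem_permutations'.1 hw
    have hle : descentCount w ≤ w.length :=
      (descentCount_le_length_tail w).trans (by simp)
    have insert_perm := map_descentCount_permutations'Aux fun x hx => h x (hwl.mem_iff.1 hx)
    simpa [Function.comp_def, Nat.cast_sub hle, ← hwl.length_eq] using (insert_perm.map f).sum_eq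
  rw [List.permutations', List.map_flatMap, List.flatMap_def, List.sum_flatten, List.map_map]
  exact congrArg List.sum (List.map_congr_left insert_sum)

end DescentCount

section Perm

lemma map_ofFn_comp_perm_eq_permutations' {n : ℕ} {α : Type*} (f : Fin n → α) :
    univ.val.map (fun σ : Equiv.Perm (Fin n) => List.ofFn (f ∘ σ)) =
      ((List.ofFn f).permutations' : Multiset (List α)) := by
  have perms_finRange : univ.val.map (fun σ : Equiv.Perm (Fin n) => List.ofFn σ) =
      ((List.finRange n).permutations' : Multiset (List (Fin n))) := by
    refine Multiset.eq_of_le_of_card_le ((Multiset.le_iff_subset ?_).2 fun l hl => ?_) ?_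
    · exact univ.nodup.map fun σ τ h => DFunLike.coe_injective (List.ofFn_injective h)
    · obtain ⟨σ, -, rfl⟩ := Multiset.mem_map.1 hl
      simpa [List.ofFn_id] using σ.ofFn_comp_perm id
    · simp [← (List.permutations_perm_permutations' _).length_eq, List.length_permutations,
        Fintype.card_perm]
  simpa [List.map_permutations', List.ofFn_eq_map, Function.comp_def] using
    congrArg (Multiset.map (List.map f)) perms_finRange

lemma des_eq_descentCount {n : ℕ} (π : Equiv.Perm (Fin n)) :
    des π = descentCount (List.ofFn fun i => (π i : ℕ)) := by
  have consecutive : (List.ofFn fun i => (π i : ℕ)).zip (List.ofFn fun i => (π i : ℕ)).tail =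
      (List.range (n - 1)).map fun i => (permVal π i, permVal π (i + 1)) := by
    refine List.ext_getElem (by simp) fun i _ hi => ?_
    have hi : i + 1 < n := by
      rw [List.length_map, List.length_range] at hi
      omega
    simp [permVal, hi, (Nat.lt_succ_self i).trans hi]
  rw [des, ← Nat.count_eq_card_filter_range, descentCount, consecutive, List.countP_map]
  rfl

lemma sum_des_eq_sum_permutations' {M : Type*} [AddCommMonoid M] (n : ℕ) (f : ℕ → M) :
    ∑ π : Equiv.Perm (Fin n), f (des π) =
      ((List.range n).permutations'.map fun l => f (descentCount l)).sum := by
  have hrange : List.ofFn (fun i : Fin n => (i : ℕ)) = List.range n :=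
    List.ext_getElem (by simp) (by simp)
  have words := map_ofFn_comp_perm_eq_permutations' fun i : Fin n => (i : ℕ)
  rw [hrange] at words
  simpa [des_eq_descentCount, Function.comp_def] using
    congrArg (fun s => (s.map fun l => f (descentCount l)).sum) words

lemma sum_des_succ {R : Type*} [Ring R] (n : ℕ) (f : ℕ → R) :
    ∑ π : Equiv.Perm (Fin (n + 1)), f (des π) =
      ∑ π : Equiv.Perm (Fin n),
        (((des π : R) + 1) * f (des π) + ((n : R) - des π) * f (des π + 1)) := by
  have hperm : (List.range (n + 1)).Perm (n :: List.range n) := by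
    rw [List.range_succ]
    exact List.perm_append_singleton n (List.range n)
  have hmax : ∀ x ∈ List.range n, x < n := fun x => List.mem_range.1
  rw [sum_des_eq_sum_permutations', (hperm.permutations'.map _).sum_eq,
    sum_map_descentCount_permutations'_cons hmax,
    sum_des_eq_sum_permutations' n fun d => ((d : R) + 1) * f d + ((n : R) - d) * f (d + 1),
    List.length_range]

end Perm

section CentralMoments

/-- The number of descents of `π`, centered at its mean `(n - 1) / 2` for `1 ≤ n`. -/
noncomputable def centeredDes {n : ℕ} (π : Equiv.Perm (Fin n)) : ℝ :=
  des π - ((n : ℝ) - 1) / 2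

lemma expect_centeredDes_succ (n : ℕ) (g : ℝ → ℝ) :
    (n + 1) * 𝔼 π : Equiv.Perm (Fin (n + 1)), g (centeredDes π) =
      𝔼 π : Equiv.Perm (Fin n),
        (((n + 1) / 2 + centeredDes π) * g (centeredDes π - 1 / 2) +
          ((n + 1) / 2 - centeredDes π) * g (centeredDes π + 1 / 2)) := by
  have keep (π : Equiv.Perm (Fin n)) :
      (des π : ℝ) - ((n + 1 : ℕ) - 1) / 2 = centeredDes π - 1 / 2 := by
    push_cast [centeredDes]
    ring
  have raise (π : Equiv.Perm (Fin n)) :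
      ((des π + 1 : ℕ) : ℝ) - ((n + 1 : ℕ) - 1) / 2 = centeredDes π + 1 / 2 := by
    push_cast [centeredDes]
    ring
  have keep_weight (π : Equiv.Perm (Fin n)) : (des π : ℝ) + 1 = (n + 1) / 2 + centeredDes π := by
    rw [centeredDes]
    ring
  have raise_weight (π : Equiv.Perm (Fin n)) : (n : ℝ) - des π = (n + 1) / 2 - centeredDes π := by
    rw [centeredDes]
    ring
  have sum_succ : ∑ σ : Equiv.Perm (Fin (n + 1)), g (centeredDes σ) =
      ∑ π : Equiv.Perm (Fin n), (((n + 1) / 2 + centeredDes π) * g (centeredDes π - 1 / 2) +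
        ((n + 1) / 2 - centeredDes π) * g (centeredDes π + 1 / 2)) := by
    have recurrence := sum_des_succ n fun d => g (d - ((n + 1 : ℕ) - 1) / 2)
    simp only [keep, raise, keep_weight, raise_weight] at recurrence
    exact recurrence
  simp only [Fintype.expect_eq_sum_div_card, Fintype.card_perm, Fintype.card_fin, sum_succ,
    Nat.factorial_succ, Nat.cast_mul]
  rw [Nat.cast_add_one, ← mul_div_assoc, mul_div_mul_left _ _ n.cast_add_one_ne_zero]

lemma expect_centeredDes_sq_succ (n : ℕ) :
    (n + 1) * 𝔼 π : Equiv.Perm (Fin (n + 1)), centeredDes π ^ 2 =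
      (n - 1) * 𝔼 π : Equiv.Perm (Fin n), centeredDes π ^ 2 + (n + 1) / 4 := by
  rw [expect_centeredDes_succ n (· ^ 2), mul_expect,
    ← Fintype.expect_const (ι := Equiv.Perm (Fin n)) ((n + 1 : ℝ) / 4), ← expect_add_distrib]
  exact expect_congr rfl fun π _ => by ring

lemma expect_centeredDes_pow_four_succ (n : ℕ) :
    (n + 1) * 𝔼 π : Equiv.Perm (Fin (n + 1)), centeredDes π ^ 4 =
      (n - 3) * 𝔼 π : Equiv.Perm (Fin n), centeredDes π ^ 4 +
        (3 * n + 1) / 2 * 𝔼 π : Equiv.Perm (Fin n), centeredDes π ^ 2 + (n + 1) / 16 := by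
  rw [expect_centeredDes_succ n (· ^ 4), mul_expect, mul_expect,
    ← Fintype.expect_const (ι := Equiv.Perm (Fin n)) ((n + 1 : ℝ) / 16), ← expect_add_distrib,
    ← expect_add_distrib]
  exact expect_congr rfl fun π _ => by ring

theorem expect_centeredDes_sq {n : ℕ} (hn : 2 ≤ n) :
    𝔼 π : Equiv.Perm (Fin n), centeredDes π ^ 2 = ((n : ℝ) + 1) / 12 := by
  induction n, hn using Nat.le_induction with
  | base =>
    have recurrence := expect_centeredDes_sq_succ 1
    push_cast at recurrence ⊢
    linear_combination recurrence / 2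
  | succ n _ ih =>
    refine mul_left_cancel₀ n.cast_add_one_ne_zero ?_
    rw [expect_centeredDes_sq_succ, ih]
    push_cast
    ring

theorem expect_centeredDes_pow_four {n : ℕ} (hn : 4 ≤ n) :
    𝔼 π : Equiv.Perm (Fin n), centeredDes π ^ 4 = ((n : ℝ) + 1) * (5 * n + 3) / 240 := by
  induction n, hn using Nat.le_induction with
  | base =>
    have recurrence := expect_centeredDes_pow_four_succ 3
    rw [expect_centeredDes_sq (by norm_num)] at recurrence
    push_cast at recurrence ⊢
    linear_combination recurrence / 4
  | succ n hn ih =>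
    refine mul_left_cancel₀ n.cast_add_one_ne_zero ?_
    rw [expect_centeredDes_pow_four_succ, ih, expect_centeredDes_sq (by omega)]
    push_cast
    ring

lemma centeredDes_fin_one (π : Equiv.Perm (Fin 1)) : centeredDes π = 0 := by
  simp [centeredDes, des]

lemma expect_centeredDes_pow_four_fin_two :
    𝔼 π : Equiv.Perm (Fin 2), centeredDes π ^ 4 = 1 / 16 := by
  have recurrence := expect_centeredDes_pow_four_succ 1
  simp only [centeredDes_fin_one, zero_pow two_ne_zero, zero_pow four_ne_zero,
    expect_const_zero] at recurrence
  push_cast at recurrence ⊢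
  linear_combination recurrence / 2

lemma expect_centeredDes_pow_four_fin_three :
    𝔼 π : Equiv.Perm (Fin 3), centeredDes π ^ 4 = 1 / 3 := by
  have recurrence := expect_centeredDes_pow_four_succ 2
  rw [expect_centeredDes_pow_four_fin_two, expect_centeredDes_sq le_rfl] at recurrence
  push_cast at recurrence ⊢
  linear_combination recurrence / 3

theorem abs_expect_centeredDes_pow_four_sub_le {n : ℕ} (hn : 1 ≤ n) :
    |(𝔼 π : Equiv.Perm (Fin n), centeredDes π ^ 4) - (n : ℝ) ^ 2 / 48| ≤ (n : ℝ) / 20 := by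
  obtain rfl | rfl | rfl | hn : n = 1 ∨ n = 2 ∨ n = 3 ∨ 4 ≤ n := by omega
  · norm_num [centeredDes_fin_one, abs_le]
  · norm_num [expect_centeredDes_pow_four_fin_two, abs_le]
  · norm_num [expect_centeredDes_pow_four_fin_three, abs_le]
  · have hn' : (4 : ℝ) ≤ n := mod_cast hn
    have excess : ((n : ℝ) + 1) * (5 * n + 3) / 240 - (n : ℝ) ^ 2 / 48 = (8 * n + 3) / 240 := by
      ring
    rw [expect_centeredDes_pow_four hn, excess, abs_of_nonneg (by positivity)]
    linarith

end CentralMoments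

/-- The fourth central moment of the number of descents is `3n²/144 + O(n)`, i.e.
`|E[(D_n - (n-1)/2)⁴] - n²/48| ≤ C·n`. -/
theorem descents_fourth_central_moment :
    ∃ C : ℝ, 0 < C ∧ ∀ n : ℕ, 1 ≤ n →
      |(∑ π : Equiv.Perm (Fin n), ((des π : ℝ) - ((n : ℝ) - 1) / 2) ^ 4)
          / (Nat.factorial n : ℝ) - (n : ℝ) ^ 2 / 48| ≤ C * n := by
  refine ⟨1 / 20, by norm_num, fun n hn => ?_⟩
  have hE : (∑ π : Equiv.Perm (Fin n), ((des π : ℝ) - ((n : ℝ) - 1) / 2) ^ 4) / (n.factorial : ℝ) =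
      𝔼 π : Equiv.Perm (Fin n), centeredDes π ^ 4 := by
    simp [Fintype.expect_eq_sum_div_card, Fintype.card_perm, centeredDes]
  rw [hE, one_div_mul_eq_div]
  exact abs_expect_centeredDes_pow_four_sub_le hn
end
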